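/- arXiv:2305.19175 — 10 statements merged into one kernel-verified Lean document; each statement's English description precedes it below -/
import Mathlib

section
/- Let A be a finite type, let n : A → ℕ with n(a) ≥ 1 for all a, and set L := ∑_{a∈A} n(a). Let q : A → ℝ satisfy q(a) > 0 for all a and ∑_{a∈A} q(a) = 1. Then ∏_{a∈A} q(a)^{n(a)} = ∏_{a∈A} (n(a)/L)^{n(a)} holds if and only if q(a) = n(a)/L for every a ∈ A; i.e., q(a) = n(a)/L is the unique maximizer of ∏_a q(a)^{n(a)} among strictly positive probability vectors. -/
/-- The logarithm inequality `log x < x - 1` for `x ≠ 1`, summed with positive weights: if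
`∑ n a * x a ≤ ∑ n a` with `x` positive and not identically `1`, then `∏ x a ^ n a < 1`. -/
theorem prod_pow_lt_one_of_weighted_sum_le {A : Type*} [Fintype A] {n : A → ℕ}
    (hn : ∀ a, 1 ≤ n a) {x : A → ℝ} (hx : ∀ a, 0 < x a)
    (hsum : ∑ a, (n a : ℝ) * x a ≤ ∑ a, (n a : ℝ)) (hne : ∃ a, x a ≠ 1) :
    ∏ a, x a ^ n a < 1 := by
  have hpos : ∀ a, (0 : ℝ) < n a := fun a => by exact_mod_cast hn a
  have hlt : ∑ a, (n a : ℝ) * Real.log (x a) < ∑ a, (n a : ℝ) * (x a - 1) := by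
    obtain ⟨b, hb⟩ := hne
    exact Finset.sum_lt_sum
      (fun a _ => mul_le_mul_of_nonneg_left (Real.log_le_sub_one_of_pos (hx a)) (hpos a).le)
      ⟨b, Finset.mem_univ b,
        mul_lt_mul_of_pos_left (Real.log_lt_sub_one_of_pos (hx b) hb) (hpos b)⟩
  have hlog : Real.log (∏ a, x a ^ n a) = ∑ a, (n a : ℝ) * Real.log (x a) := by
    rw [Real.log_prod fun a _ => (pow_pos (hx a) _).ne']
    simp only [Real.log_pow]
  rw [← Real.log_neg_iff (Finset.prod_pos fun a _ => pow_pos (hx a) _), hlog]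
  simp only [mul_sub, mul_one, Finset.sum_sub_distrib] at hlt
  linarith

/-- Uniqueness of the maximizer: for strictly positive probability vectors `q` and exponents
`n a ≥ 1`, the product `∏ q a ^ n a` attains the value `∏ (n a / L) ^ n a` iff
`q a = n a / L` for every `a`. -/
theorem iid_sequence_probability_eq_max_iff {A : Type*} [Fintype A] (n : A → ℕ)
    (hn : ∀ a, 1 ≤ n a) (L : ℕ) (hL : L = ∑ a, n a) (q : A → ℝ) (hq : ∀ a, 0 < q a)
    (hsum : ∑ a, q a = 1) :
    (∏ a, q a ^ n a = ∏ a, ((n a : ℝ) / (L : ℝ)) ^ n a) ↔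
      ∀ a, q a = (n a : ℝ) / (L : ℝ) := by
  refine ⟨fun h => ?_, fun h => Finset.prod_congr rfl fun a _ => by rw [h a]⟩
  have hnpos : ∀ a, (0 : ℝ) < n a := fun a => by exact_mod_cast hn a
  have hLcast : (L : ℝ) = ∑ a, (n a : ℝ) := by rw [hL, Nat.cast_sum]
  have hLpos : ∀ a : A, (0 : ℝ) < L := fun a => by
    rw [hLcast]
    exact Finset.sum_pos (fun b _ => hnpos b) ⟨a, Finset.mem_univ a⟩
  have hp : ∀ a, (0 : ℝ) < n a / L := fun a => div_pos (hnpos a) (hLpos a)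
  by_contra! hne
  obtain ⟨b, hb⟩ := hne
  have hratio : ∑ a, (n a : ℝ) * (q a / (n a / L)) = ∑ a, (n a : ℝ) := by
    calc ∑ a, (n a : ℝ) * (q a / (n a / L)) = ∑ a, (L : ℝ) * q a :=
          Finset.sum_congr rfl fun a _ => by
            have := (hnpos a).ne'
            have := (hLpos a).ne'
            field_simp
      _ = ∑ a, (n a : ℝ) := by rw [← Finset.mul_sum, hsum, mul_one, hLcast]
  have hlt := prod_pow_lt_one_of_weighted_sum_le hn (fun a => div_pos (hq a) (hp a)) hratio.le
    ⟨b, fun hb1 => hb ((div_eq_one_iff_eq (hp b).ne').mp hb1)⟩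
  simp only [div_pow (q _), Finset.prod_div_distrib] at hlt
  rw [h, div_self (Finset.prod_pos fun a _ => pow_pos (hp a) _).ne'] at hlt
  exact lt_irrefl _ hlt
end

section
/- Let I be a finite type, let x : I → ℂ^d be a family of vectors, let p : I → ℝ with p(i) > 0 for all i, and set ρ := ∑_{i∈I} p(i) • (x(i) ⬝ x(i)*), where x ⬝ x* denotes the outer product matrix with entries x(j) · conj(x(k)). Then for every i ∈ I there exists y ∈ ℂ^d with ρ.mulVec y = x(i); that is, every vector x(i) lies in the range of the linear map induced by ρ. -/
open scoped ComplexOrder in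
/-- Over `ℂ`, the matrices `A * Aᴴ` and `A` have the same range. -/
theorem range_mulVecLin_self_mul_conjTranspose {m n : Type*} [Fintype m] [Fintype n]
    (A : Matrix m n ℂ) :
    LinearMap.range (A * A.conjTranspose).mulVecLin = LinearMap.range A.mulVecLin := by
  refine Submodule.eq_of_le_of_finrank_eq ?_ (Matrix.rank_self_mul_conjTranspose A)
  rw [Matrix.mulVecLin_mul]
  exact LinearMap.range_comp_le_range _ _

/-- A nonnegative combination of outer products factors as `A * Aᴴ`, where the columns of `A` are
the vectors scaled by the square roots of the weights. -/
theorem sum_smul_vecMulVec_star_eq_mul_conjTranspose {m ι : Type*} [Fintype ι]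
    (x : ι → m → ℂ) (p : ι → ℝ) (hp : ∀ i, 0 ≤ p i) :
    ∑ i, p i • Matrix.vecMulVec (x i) (star (x i)) =
      (Matrix.of fun j i => (√(p i) : ℂ) * x i j) *
        (Matrix.of fun j i => (√(p i) : ℂ) * x i j).conjTranspose := by
  ext j k
  simp only [Matrix.sum_apply, Matrix.smul_apply, Matrix.vecMulVec_apply, Pi.star_apply,
    Matrix.mul_apply, Matrix.conjTranspose_apply, Matrix.of_apply, star_mul', RCLike.star_def,
    Complex.conj_ofReal, Complex.real_smul]
  refine Finset.sum_congr rfl fun i _ => ?_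
  have h : (p i : ℂ) = (√(p i) : ℂ) * (√(p i) : ℂ) := by
    rw [← Complex.ofReal_mul, Real.mul_self_sqrt (hp i)]
  rw [h]
  ring

/-- Every vector `x i` lies in the range of `ρ = ∑ i, p i • |x i⟩⟨x i|` when all `p i > 0`. -/
theorem mem_range_sum_outer {d : ℕ} {I : Type*} [Fintype I] (x : I → Fin d → ℂ)
    (p : I → ℝ) (hp : ∀ i, 0 < p i) (ρ : Matrix (Fin d) (Fin d) ℂ)
    (hρ : ρ = ∑ i, p i • Matrix.vecMulVec (x i) (star (x i))) :
    ∀ i, ∃ y : Fin d → ℂ, ρ.mulVec y = x i := by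
  classical
  intro i
  suffices h : x i ∈ LinearMap.range ρ.mulVecLin by simpa using h
  rw [hρ, sum_smul_vecMulVec_star_eq_mul_conjTranspose x p fun i => (hp i).le,
    range_mulVecLin_self_mul_conjTranspose]
  refine ⟨Pi.single i (√(p i) : ℂ)⁻¹, ?_⟩
  have h : (√(p i) : ℂ) ≠ 0 := Complex.ofReal_ne_zero.mpr (Real.sqrt_pos.mpr (hp i)).ne'
  ext j
  simp only [Matrix.mulVecLin_apply, Matrix.mulVec_single, Pi.smul_apply, Matrix.col_apply,
    Matrix.of_apply, MulOpposite.smul_eq_mul_unop, MulOpposite.unop_op]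
  field_simp
end

section
/- Let n ≥ 1, d ≥ 1, and let φ : Fin n → (Fin d → ℂ) be a family of nonzero vectors. Define the product vector v ∈ ℂ^{(Fin n → Fin d)} by v(u) = ∏_{j : Fin n} φ(j)(u(j)). If v is invariant under all index permutations, i.e., v(u ∘ σ) = v(u) for every permutation σ of Fin n and every u : Fin n → Fin d, then there exist a vector ψ : Fin d → ℂ and a scalar c ∈ ℂ such that v(u) = c · ∏_{j} ψ(u(j)) for all u; equivalently, each φ(j) is a scalar multiple of a common vector ψ. -/
/-- The factors of a permutation-invariant product vector with nonzero factors are pairwise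
proportional. -/
theorem mul_apply_comm_of_prod_comp_perm {ι α : Type*} [Fintype ι] [DecidableEq ι]
    {R : Type*} [CommRing R] [IsDomain R] (φ : ι → α → R) (hφ : ∀ j, φ j ≠ 0)
    (hsym : ∀ (σ : Equiv.Perm ι) (u : ι → α), ∏ j, φ j (u (σ j)) = ∏ j, φ j (u j))
    (i j : ι) (a b : α) : φ i b * φ j a = φ i a * φ j b := by
  rcases eq_or_ne i j with rfl | hij
  · exact mul_comm _ _
  choose w hw using fun k => Function.ne_iff.mp (hφ k)
  have split (f : ι → R) : ∏ k, f k = f i * f j * ∏ k ∈ (Finset.univ.erase i).erase j, f k := by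
    rw [← Finset.mul_prod_erase _ f (Finset.mem_univ i), ← Finset.mul_prod_erase _ f
      (Finset.mem_erase.mpr ⟨hij.symm, Finset.mem_univ j⟩), mul_assoc]
  have h := hsym (Equiv.swap i j) (Function.update (Function.update w i a) j b)
  have rest (u : ι → α) (hu : ∀ k, k ≠ i → k ≠ j → u k = w k) :
      ∏ k ∈ (Finset.univ.erase i).erase j, φ k (u k)
        = ∏ k ∈ (Finset.univ.erase i).erase j, φ k (w k) := by
    refine Finset.prod_congr rfl fun k hk => ?_
    simp only [Finset.mem_erase] at hk
    rw [hu k hk.2.1 hk.1]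
  rw [split, split, rest (Function.update (Function.update w i a) j b)
      fun k hi hj => by simp [hi, hj],
    rest (fun k => Function.update (Function.update w i a) j b (Equiv.swap i j k))
      fun k hi hj => by simp [Equiv.swap_apply_of_ne_of_ne hi hj, hi, hj]] at h
  have h := mul_right_cancel₀ (Finset.prod_ne_zero_iff.mpr fun k _ => hw k) h
  simpa [hij] using h

/-- A nonzero product (tensor) vector of nonzero factors lying in the symmetric subspace
is (a scalar multiple of) a tensor power of a single vector. -/
theorem symmetric_product_vector_is_tensor_power {n d : ℕ} (hn : 1 ≤ n) (hd : 1 ≤ d)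
    (φ : Fin n → Fin d → ℂ) (hφ : ∀ j, φ j ≠ 0)
    (v : (Fin n → Fin d) → ℂ) (hv : ∀ u, v u = ∏ j, φ j (u j))
    (hsym : ∀ (σ : Equiv.Perm (Fin n)) (u : Fin n → Fin d), v (u ∘ σ) = v u) :
    ∃ (ψ : Fin d → ℂ) (c : ℂ), ∀ u, v u = c * ∏ j, ψ (u j) := by
  let i : Fin n := ⟨0, hn⟩
  obtain ⟨b, hb⟩ := Function.ne_iff.mp (hφ i)
  rw [Pi.zero_apply] at hb
  refine ⟨φ i, ∏ j, φ j b / φ i b, fun u => ?_⟩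
  rw [hv, ← Finset.prod_mul_distrib]
  refine Finset.prod_congr rfl fun j _ => ?_
  have h := mul_apply_comm_of_prod_comp_perm φ hφ
    (fun σ u => by simpa [hv] using hsym σ u) i j (u j) b
  field_simp
  linear_combination h
end

section
/- Let n ≥ 1, d ≥ 1, let I be a finite type, let p : I → ℝ with p(i) > 0 and ∑_i p(i) = 1, and let φ : I → Fin n → (Fin d → ℂ) be unit vectors (‖φ(i,j)‖ = 1 for all i, j). Define the fully separable matrix ρ ∈ Matrix (Fin n → Fin d) (Fin n → Fin d) ℂ by ρ_{u,u'} = ∑_i p(i) ∏_j φ(i,j)(u(j)) · conj(φ(i,j)(u'(j))). If ρ is symmetric in the sense that ρ_{u∘σ, u'∘σ'} = ρ_{u,u'} for all permutations σ, σ' of Fin n (equivalently P⁺_n ρ P⁺_n = ρ), then there exist unit vectors ψ : I → (Fin d → ℂ) such that ρ_{u,u'} = ∑_i p(i) ∏_j ψ(i)(u(j)) · conj(ψ(i)(u'(j))); i.e., ρ is a convex combination of n-fold tensor powers |ψ_i⟩⟨ψ_i|^{⊗n} of pure states. -/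
open Finset ComplexConjugate

/-- Proportional unit vectors have the same rank-one projector. -/
lemma mul_conj_eq_of_proportional {κ : Type*} [Fintype κ] {x y : κ → ℂ}
    (hx : ∑ k, ‖x k‖ ^ 2 = 1) (hy : ∑ k, ‖y k‖ ^ 2 = 1)
    (h : ∀ a b, x a * y b = x b * y a) (a b : κ) :
    y a * conj (y b) = x a * conj (x b) := by
  have hx' : ∑ k, x k * conj (x k) = 1 := by
    simp_rw [Complex.mul_conj']
    exact_mod_cast hx
  set c : ℂ := ∑ k, y k * conj (x k) with hc
  have hyc : ∀ k, y k = x k * c := by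
    intro k
    rw [hc, mul_sum, ← mul_one (y k), ← hx', mul_sum]
    refine sum_congr rfl fun l _ => ?_
    linear_combination -conj (x l) * h k l
  have hcn : c * conj c = 1 := by
    rw [Complex.mul_conj']
    have : ‖c‖ ^ 2 = 1 := by
      simpa [hyc, mul_pow, ← sum_mul, hx] using hy
    exact_mod_cast this
  rw [hyc a, hyc b, map_mul]
  linear_combination x a * conj (x b) * hcn

/-- Any two factors of a permutation-invariant product of nonzero vectors are proportional. -/
lemma proportional_of_prod_comp_perm {ι κ : Type*} [Fintype ι] [DecidableEq ι]
    {f : ι → κ → ℂ} (hf : ∀ j, f j ≠ 0)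
    (h : ∀ (σ : Equiv.Perm ι) (u : ι → κ), ∏ j, f j ((u ∘ σ) j) = ∏ j, f j (u j))
    (i j : ι) (a b : κ) : f i a * f j b = f i b * f j a := by
  by_cases hij : i = j
  · subst hij
    ring
  choose k hk using fun m => Function.ne_iff.mp (hf m)
  have key : ∀ v : ι → κ, (∀ m, m ≠ i → m ≠ j → v m = k m) →
      ∏ m, f m (v m) = f i (v i) * f j (v j) * ∏ m ∈ (univ.erase i).erase j, f m (k m) := by
    intro v hv
    rw [← mul_prod_erase univ _ (mem_univ i),
      ← mul_prod_erase (univ.erase i) _ (mem_erase.mpr ⟨Ne.symm hij, mem_univ j⟩), mul_assoc]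
    congr 2
    refine prod_congr rfl fun m hm => ?_
    simp only [mem_erase, mem_univ, and_true] at hm
    rw [hv m hm.2 hm.1]
  have hC : ∏ m ∈ (univ.erase i).erase j, f m (k m) ≠ 0 := prod_ne_zero_iff.mpr fun m _ => hk m
  set u : ι → κ := Function.update (Function.update k j b) i a with hu
  have hui : u i = a := by simp [hu]
  have huj : u j = b := by simp [hu, Ne.symm hij]
  have hum : ∀ m, m ≠ i → m ≠ j → u m = k m := fun m hi hj => by simp [hu, hi, hj]
  have hswap := h (Equiv.swap i j) u
  rw [key u hum, key (u ∘ Equiv.swap i j) fun m hi hj => by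
    simp [Equiv.swap_apply_of_ne_of_ne hi hj, hum m hi hj]] at hswap
  simpa [hui, huj] using (mul_right_cancel₀ hC hswap).symm

/-- If a positive combination of rank-one matrices `A i * (A i)ᴴ` agrees on all four entries
indexed by `u` and `v`, then every `A i` takes the same value at `u` and `v`. -/
lemma apply_eq_of_sum_mul_conj_eq {I κ : Type*} [Fintype I] {p : I → ℝ} (hp : ∀ i, 0 < p i)
    {A : I → κ → ℂ} {ρ : κ → κ → ℂ} (hρ : ∀ u v, ρ u v = ∑ i, (p i : ℂ) * (A i u * conj (A i v)))
    {u v : κ} (hvv : ρ v v = ρ u u) (hvu : ρ v u = ρ u u) (huv : ρ u v = ρ u u) (i : I) :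
    A i v = A i u := by
  have hsum : ∑ i, p i * ‖A i v - A i u‖ ^ 2 = 0 := by
    have : ∑ i, (p i : ℂ) * ((A i v - A i u) * conj (A i v - A i u)) = 0 := by
      calc _ = ρ v v - ρ v u - ρ u v + ρ u u := by
            simp only [hρ, ← sum_sub_distrib, ← sum_add_distrib, map_sub]
            exact sum_congr rfl fun _ _ => by ring
        _ = 0 := by rw [hvv, hvu, huv]; ring
    simp_rw [Complex.mul_conj'] at this
    exact_mod_cast this
  have hi := (sum_eq_zero_iff_of_nonneg fun i _ =>
    mul_nonneg (hp i).le (sq_nonneg _)).mp hsum i (mem_univ i)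
  simpa [(hp i).ne', sub_eq_zero] using hi


/-- Sym ∩ SEP characterization: a fully separable state that is symmetric
(`ρ_{u∘σ,u'∘σ'} = ρ_{u,u'}` for all permutations `σ, σ'`) is a convex combination of
`n`-fold tensor powers of pure states. -/
theorem symmetric_separable_is_convex_mix_of_tensor_powers {n d : ℕ} (hn : 1 ≤ n) (hd : 1 ≤ d)
    {I : Type*} [Fintype I] (p : I → ℝ) (hp : ∀ i, 0 < p i) (hpsum : ∑ i, p i = 1)
    (φ : I → Fin n → Fin d → ℂ) (hφ : ∀ i j, ∑ k, ‖φ i j k‖ ^ 2 = 1)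
    (ρ : Matrix (Fin n → Fin d) (Fin n → Fin d) ℂ)
    (hρ : ∀ u u', ρ u u' =
      ∑ i, (p i : ℂ) * ∏ j, φ i j (u j) * (starRingEnd ℂ) (φ i j (u' j)))
    (hsym : ∀ (σ σ' : Equiv.Perm (Fin n)) (u u' : Fin n → Fin d),
      ρ (u ∘ σ) (u' ∘ σ') = ρ u u') :
    ∃ ψ : I → Fin d → ℂ, (∀ i, ∑ k, ‖ψ i k‖ ^ 2 = 1) ∧
      ∀ u u', ρ u u' =
        ∑ i, (p i : ℂ) * ∏ j, ψ i (u j) * (starRingEnd ℂ) (ψ i (u' j)) := by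
  have hA : ∀ (i : I) (σ : Equiv.Perm (Fin n)) (u : Fin n → Fin d),
      ∏ j, φ i j ((u ∘ σ) j) = ∏ j, φ i j (u j) := fun i σ u =>
    apply_eq_of_sum_mul_conj_eq hp (A := fun i u => ∏ j, φ i j (u j)) (ρ := ρ)
      (fun u u' => by simp only [hρ, prod_mul_distrib, map_prod])
      (hsym σ σ u u) (by simpa using hsym σ 1 u u) (by simpa using hsym 1 σ u u) i
  have hne : ∀ i j, φ i j ≠ 0 := fun i j h => by simpa [h] using hφ i j
  refine ⟨fun i => φ i ⟨0, hn⟩, fun i => hφ i _, fun u u' => ?_⟩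
  rw [hρ]
  refine sum_congr rfl fun i _ => congrArg _ (prod_congr rfl fun j _ => ?_)
  exact mul_conj_eq_of_proportional (hφ i _) (hφ i j)
    (proportional_of_prod_comp_perm (hne i) (hA i) _ j) _ _
end

section
/- Let d ≥ 1, L ≥ 2, let I be a finite type, p : I → ℝ with p(i) > 0 and ∑_i p(i) = 1, and let φ : I → (Fin d × Fin d → ℂ) be unit vectors. Let Φ ∈ Matrix (Fin L → Fin d × Fin d) (Fin L → Fin d × Fin d) ℂ be Φ_{v,v'} = ∑_i p(i) ∏_ℓ φ(i)(v(ℓ)) · conj(φ(i)(v'(ℓ))) (a convex combination of L-fold tensor powers of pure states on ℂ^d ⊗ ℂ^d). Then the following are equivalent: (1) the partial trace of Φ over the output factor of the first party satisfies Tr_{O₁}[Φ] = (1/d) · 1_{I₁} ⊗ Tr_{A₁}[Φ], i.e., for all j, j' ∈ Fin d and all w, w' : Fin (L−1) → Fin d × Fin d, ∑_{o∈Fin d} Φ_{(cons(j,o) w),(cons(j',o) w')} = (δ_{j,j'}/d) · ∑_{j''∈Fin d, o∈Fin d} Φ_{(cons(j'',o) w),(cons(j'',o) w')}; (2) for every i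 ∈ I, the reduced state of |φ(i)⟩⟨φ(i)| over the output factor is maximally mixed: ∑_{o∈Fin d} φ(i)(j,o) · conj(φ(i)(j',o)) = δ_{j,j'}/d for all j, j' ∈ Fin d. -/
open Finset ComplexConjugate

/-- The partial trace over the second factor of the rank-one operator `|ψ⟩⟨ψ|`. -/
noncomputable def reducedState {d : ℕ} (ψ : Fin d × Fin d → ℂ) (j k : Fin d) : ℂ :=
  ∑ o : Fin d, ψ (j, o) * conj (ψ (k, o))

/-- The deviation of the reduced state of `ψ` from the maximally mixed state. -/
noncomputable def mixedDefect {d : ℕ} (ψ : Fin d × Fin d → ℂ) (j k : Fin d) : ℂ :=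
  reducedState ψ j k - (if j = k then 1 else 0) / (d : ℂ)

lemma mixedDefect_swap {d : ℕ} (ψ : Fin d × Fin d → ℂ) (j j' : Fin d) :
    mixedDefect ψ j' j = conj (mixedDefect ψ j j') := by
  simp only [mixedDefect, reducedState, map_sub, map_sum, map_mul, map_div₀, Complex.conj_conj,
    map_natCast, apply_ite conj, map_one, map_zero, eq_comm (a := j')]
  simp only [mul_comm]

lemma sum_mul_conj_eq_one {α : Type*} [Fintype α] {ψ : α → ℂ} (hψ : ∑ x, ‖ψ x‖ ^ 2 = 1) :
    ∑ x, ψ x * conj (ψ x) = 1 := by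
  simp only [Complex.mul_conj']
  exact_mod_cast hψ

lemma sum_reducedState_diag {d : ℕ} {ψ : Fin d × Fin d → ℂ} (hψ : ∑ x, ‖ψ x‖ ^ 2 = 1) :
    ∑ j, reducedState ψ j j = 1 := by
  rw [← sum_mul_conj_eq_one hψ, Fintype.sum_prod_type]
  rfl

/-- Tracing out all the parties of a tensor power of a normalised pure state gives `1`. -/
lemma sum_prod_mul_conj_eq_one {α : Type*} [Fintype α] {ψ : α → ℂ} (hψ : ∑ x, ‖ψ x‖ ^ 2 = 1)
    (k : ℕ) : ∑ u : Fin k → α, ∏ ℓ, ψ (u ℓ) * conj (ψ (u ℓ)) = 1 := by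
  rw [← Fintype.sum_pow (fun x => ψ x * conj (ψ x)), sum_mul_conj_eq_one hψ, one_pow]

/-- If the defects, weighted by the pure states themselves, average to zero, they all vanish. -/
lemma mixedDefect_eq_zero_of_sum_eq_zero {d : ℕ} {I : Type*} [Fintype I] {p : I → ℝ}
    (hp : ∀ i, 0 < p i) {φ : I → Fin d × Fin d → ℂ} (hφ : ∀ i, ∑ x, ‖φ i x‖ ^ 2 = 1)
    (j j' : Fin d)
    (h : ∀ x x', ∑ i, (p i : ℂ) * mixedDefect (φ i) j j' * (φ i x * conj (φ i x')) = 0) (i : I) :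
    mixedDefect (φ i) j j' = 0 := by
  have hR : ∀ a a', ∑ i, (p i : ℂ) * mixedDefect (φ i) j j' * reducedState (φ i) a a' = 0 := by
    intro a a'
    simp only [reducedState, mul_sum]
    rw [sum_comm]
    exact sum_eq_zero fun o _ => h (a, o) (a', o)
  have hT : ∑ i, (p i : ℂ) * mixedDefect (φ i) j j' = 0 := by
    have hsum := sum_eq_zero fun a (_ : a ∈ (univ : Finset (Fin d))) => hR a a
    rw [sum_comm] at hsum
    simpa only [← mul_sum, sum_reducedState_diag (hφ _), mul_one] using hsum
  have hsq : ∑ i, (p i : ℂ) * mixedDefect (φ i) j j' * mixedDefect (φ i) j' j = 0 := by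
    conv_lhs => enter [2, i]; rw [mixedDefect.eq_def (φ i) j' j, mul_sub]
    rw [sum_sub_distrib, hR, ← sum_mul, hT, zero_mul, sub_zero]
  have hreal : ∑ i, p i * ‖mixedDefect (φ i) j j'‖ ^ 2 = 0 := by
    simp only [mixedDefect_swap _ j j', mul_assoc, Complex.mul_conj'] at hsq
    exact_mod_cast hsq
  have hi := (sum_eq_zero_iff_of_nonneg fun i _ =>
    mul_nonneg (hp i).le (sq_nonneg _)).1 hreal i (mem_univ i)
  simpa [(hp i).ne'] using hi

/-- For a symmetric fully separable multipartite state (a convex combination of `L`-fold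
tensor powers of pure states on `ℂ^d ⊗ ℂ^d`, with `L = m + 1 ≥ 2`), the partial-trace
(trace-preservation) constraint on the first party holds iff every pure component has
maximally mixed reduced state on the output factor. -/
theorem first_party_TP_iff_components_TP {d : ℕ} (hd : 1 ≤ d) {m : ℕ} (hm : 1 ≤ m)
    {I : Type*} [Fintype I] (p : I → ℝ) (hp : ∀ i, 0 < p i) (hpsum : ∑ i, p i = 1)
    (φ : I → Fin d × Fin d → ℂ) (hφ : ∀ i, ∑ x, ‖φ i x‖ ^ 2 = 1)
    (Φ : Matrix (Fin (m + 1) → Fin d × Fin d) (Fin (m + 1) → Fin d × Fin d) ℂ)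
    (hΦ : ∀ v v', Φ v v' =
      ∑ i, (p i : ℂ) * ∏ ℓ, φ i (v ℓ) * (starRingEnd ℂ) (φ i (v' ℓ))) :
    (∀ (j j' : Fin d) (w w' : Fin m → Fin d × Fin d),
        ∑ o : Fin d, Φ (Fin.cons (j, o) w) (Fin.cons (j', o) w') =
          (if j = j' then 1 else 0) / (d : ℂ) *
            ∑ j'' : Fin d, ∑ o : Fin d, Φ (Fin.cons (j'', o) w) (Fin.cons (j'', o) w')) ↔
      (∀ (i : I) (j j' : Fin d),
        ∑ o : Fin d, φ i (j, o) * (starRingEnd ℂ) (φ i (j', o)) =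
          (if j = j' then 1 else 0) / (d : ℂ)) := by
  have hpartial : ∀ (j j' : Fin d) (w w' : Fin m → Fin d × Fin d),
      ∑ o : Fin d, Φ (Fin.cons (j, o) w) (Fin.cons (j', o) w') =
        ∑ i, (p i : ℂ) * reducedState (φ i) j j' * ∏ ℓ, φ i (w ℓ) * conj (φ i (w' ℓ)) := by
    intro j j' w w'
    simp only [hΦ, Fin.prod_univ_succ, Fin.cons_zero, Fin.cons_succ, reducedState]
    rw [sum_comm]
    simp only [mul_sum, sum_mul, mul_assoc]
  have htrace : ∀ w w' : Fin m → Fin d × Fin d,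
      ∑ j : Fin d, ∑ o : Fin d, Φ (Fin.cons (j, o) w) (Fin.cons (j, o) w') =
        ∑ i, (p i : ℂ) * ∏ ℓ, φ i (w ℓ) * conj (φ i (w' ℓ)) := by
    intro w w'
    simp only [hpartial]
    rw [sum_comm]
    simp only [← sum_mul, ← mul_sum, sum_reducedState_diag (hφ _), mul_one]
  have hdefect : ∀ (j j' : Fin d) (w w' : Fin m → Fin d × Fin d),
      (∑ o : Fin d, Φ (Fin.cons (j, o) w) (Fin.cons (j', o) w') =
          (if j = j' then 1 else 0) / (d : ℂ) *
            ∑ j'' : Fin d, ∑ o : Fin d, Φ (Fin.cons (j'', o) w) (Fin.cons (j'', o) w')) ↔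
        ∑ i, (p i : ℂ) * mixedDefect (φ i) j j' * ∏ ℓ, φ i (w ℓ) * conj (φ i (w' ℓ)) = 0 := by
    intro j j' w w'
    rw [hpartial, htrace, ← sub_eq_zero, mul_sum, ← sum_sub_distrib]
    refine Eq.congr_left (sum_congr rfl fun i _ => ?_)
    rw [mixedDefect]
    ring
  simp only [hdefect]
  constructor
  · intro h i j j'
    obtain ⟨k, rfl⟩ : ∃ k, m = k + 1 := ⟨m - 1, by omega⟩
    refine sub_eq_zero.1 (mixedDefect_eq_zero_of_sum_eq_zero hp hφ j j' (fun x x' => ?_) i)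
    have hsum := sum_eq_zero fun u (_ : u ∈ (univ : Finset (Fin k → Fin d × Fin d))) =>
      h j j' (Fin.cons x u) (Fin.cons x' u)
    rw [sum_comm] at hsum
    simpa only [Fin.prod_univ_succ, Fin.cons_zero, Fin.cons_succ, ← mul_sum,
      sum_prod_mul_conj_eq_one (hφ _), mul_one] using hsum
  · intro h j j' w w'
    refine sum_eq_zero fun i _ => ?_
    rw [mixedDefect, reducedState, h, sub_self, mul_zero, zero_mul]
end

section
/- Let I be a finite type, let E : I → Matrix (Fin d) (Fin d) ℂ, and let p : I → ℝ with p(i) > 0 for all i. If the Kronecker sum ∑_{i∈I} p(i) • (E(i) ⊗ₖ E(i)*) = 0, where E(i)* is the conjugate transpose of E(i) and ⊗ₖ is the Kronecker product (a d²×d² matrix), then E(i) = 0 for every i ∈ I. -/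
open Matrix Kronecker

/-- If a positively weighted sum of Kronecker products `E i ⊗ₖ (E i)ᴴ` vanishes,
then every `E i` vanishes. -/
theorem eq_zero_of_sum_kronecker_conjTranspose_eq_zero {d : ℕ} {I : Type*} [Fintype I]
    (E : I → Matrix (Fin d) (Fin d) ℂ) (p : I → ℝ) (hp : ∀ i, 0 < p i)
    (h : ∑ i, p i • (E i ⊗ₖ (E i)ᴴ) = 0) :
    ∀ i, E i = 0 := by
  intro i
  ext a b
  have hsum : ∑ j, p j * Complex.normSq (E j a b) = 0 := by
    have hentry := congrFun (congrFun h (a, b)) (b, a)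
    simp only [Matrix.sum_apply, Matrix.smul_apply, kroneckerMap_apply, conjTranspose_apply,
      Complex.star_def, Complex.mul_conj, Complex.real_smul, Matrix.zero_apply] at hentry
    exact_mod_cast hentry
  have hzero := (Finset.sum_eq_zero_iff_of_nonneg fun j _ =>
    mul_nonneg (hp j).le (Complex.normSq_nonneg (E j a b))).mp hsum i (Finset.mem_univ i)
  exact Complex.normSq_eq_zero.mp ((mul_eq_zero.mp hzero).resolve_left (hp i).ne')
end

section
/- Let d ≥ 1 and n, m ≥ 0, and let t : Fin d → ℕ with ∑_i t(i) = n + m. Then, identifying Fin (n+m) → Fin d with pairs (u₁, u₂) where u₁ : Fin n → Fin d and u₂ : Fin m → Fin d via Fin.append, one has for all u₁, u₂: Sym_{n+m}(t)(append u₁ u₂) = ∑_{(r,s)} Sym_n(r)(u₁) · Sym_m(s)(u₂), where the sum runs over all pairs r, s : Fin d → ℕ with r + s = t, ∑_i r(i) = n and ∑_i s(i) = m. Equivalently, the non-normalized symmetric basis vector splits as Sym(t) = ∑_{r+s=t} Sym(r) ⊗ Sym(s). -/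
/-- The type of a tuple `u : Fin n → Fin d`: `typeOf u i` counts the occurrences of `i` in `u`. -/
def typeOf {n d : ℕ} (u : Fin n → Fin d) : Fin d → ℕ :=
  fun i => (Finset.univ.filter fun ℓ => u ℓ = i).card

/-- The non-normalized symmetric basis vector `Sym(t)` associated to a type `t`:
its entry at `u` is `1` if `u` has type `t` and `0` otherwise. -/
def symVec {d : ℕ} (n : ℕ) (t : Fin d → ℕ) : (Fin n → Fin d) → ℂ :=
  fun u => if typeOf u = t then 1 else 0

theorem sum_typeOf {n d : ℕ} (u : Fin n → Fin d) : ∑ i, typeOf u i = n := by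
  simpa [typeOf] using (Finset.card_eq_sum_card_fiberwise (f := u) (s := Finset.univ)
    (t := Finset.univ) (fun _ _ => Finset.mem_coe.2 (Finset.mem_univ _))).symm

theorem typeOf_append {n m d : ℕ} (u₁ : Fin n → Fin d) (u₂ : Fin m → Fin d) :
    typeOf (Fin.append u₁ u₂) = typeOf u₁ + typeOf u₂ := by
  funext i
  simp only [typeOf, Finset.card_filter, Fin.sum_univ_add, Fin.append_left, Fin.append_right,
    Pi.add_apply]

/-- Splitting of a non-normalized symmetric basis vector into two parts:
`Sym(t) = ∑_{r+s=t} Sym(r) ⊗ Sym(s)`, where the sum runs over all decompositions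
`r + s = t` with `∑ r = n` and `∑ s = m` (parametrized by `r ≤ t`, `s := t - r`). -/
theorem symVec_split {d : ℕ} (hd : 1 ≤ d) (n m : ℕ) (t : Fin d → ℕ) (ht : ∑ i, t i = n + m)
    (u₁ : Fin n → Fin d) (u₂ : Fin m → Fin d) :
    symVec (n + m) t (Fin.append u₁ u₂) =
      ∑ r ∈ Fintype.piFinset (fun i => Finset.range (t i + 1)),
        if ∑ i, r i = n then symVec n r u₁ * symVec m (t - r) u₂ else 0 := by
  simp only [symVec, typeOf_append]
  by_cases h : typeOf u₁ ≤ t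
  · rw [Finset.sum_eq_single_of_mem (typeOf u₁)
      (Fintype.mem_piFinset.2 fun i => Finset.mem_range_succ_iff.2 (h i))
      (fun r _ hr => by simp [hr.symm])]
    simp [sum_typeOf, eq_tsub_iff_add_eq_of_le h, add_comm]
  · rw [if_neg (fun e : typeOf u₁ + typeOf u₂ = t => h (e ▸ le_self_add)), Finset.sum_eq_zero]
    intro r hr
    have hrt : r ≤ t := fun i =>
      Finset.mem_range_succ_iff.1 (Fintype.mem_piFinset.1 hr i)
    have hne : typeOf u₁ ≠ r := fun e => h (e ▸ hrt)
    simp [hne]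
end

section
/- Let A be a finite type, and let E : A → Matrix (Fin d) (Fin d) ℂ be a POVM: each E(a) is positive semidefinite and ∑_{a∈A} E(a) = 1. Suppose that for each a ∈ A there exists a density matrix ρ(a) (positive semidefinite with trace 1) such that trace(ρ(a) · E(a)) = 1. Then Fintype.card A ≤ d. In other words, a set of states that can be perfectly discriminated by a single POVM on ℂ^d has at most d elements. -/
open scoped ComplexOrder

namespace Matrix

open scoped Norms.Frobenius MatrixOrder

/-- The trace of `Mᴴ * M` is the square of the Frobenius norm of `M`. -/
theorem trace_conjTranspose_mul_self_eq_frobenius_norm_sq {m n 𝕜 : Type*} [Fintype m] [Fintype n]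
    [RCLike 𝕜] (M : Matrix m n 𝕜) : (Mᴴ * M).trace = ((‖M‖ ^ 2 : ℝ) : 𝕜) := by
  have hnonneg : 0 ≤ ∑ i, ∑ j, ‖M i j‖ ^ 2 := by positivity
  have hnorm : ‖M‖ ^ 2 = ∑ i, ∑ j, ‖M i j‖ ^ 2 := by
    rw [frobenius_norm_def, ← Real.sqrt_eq_rpow]
    simp only [Real.rpow_two]
    exact Real.sq_sqrt hnonneg
  rw [hnorm, Finset.sum_comm]
  simp [trace, mul_apply, RCLike.conj_mul]

/-- The trace of a product of positive semidefinite matrices is at most the product of the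
traces. -/
theorem PosSemidef.trace_mul_le {n 𝕜 : Type*} [Fintype n] [RCLike 𝕜] {P Q : Matrix n n 𝕜}
    (hP : P.PosSemidef) (hQ : Q.PosSemidef) : (P * Q).trace ≤ P.trace * Q.trace := by
  classical
  obtain ⟨B, rfl⟩ := CStarAlgebra.nonneg_iff_eq_star_mul_self.mp hP.nonneg
  obtain ⟨C, rfl⟩ := CStarAlgebra.nonneg_iff_eq_star_mul_self.mp hQ.nonneg
  simp only [star_eq_conjTranspose]
  have hcycle : (Bᴴ * B * (Cᴴ * C)).trace = ((B * Cᴴ)ᴴ * (B * Cᴴ)).trace := by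
    rw [conjTranspose_mul, conjTranspose_conjTranspose, ← Matrix.mul_assoc, trace_mul_comm]
    simp only [Matrix.mul_assoc]
  rw [hcycle]
  simp only [trace_conjTranspose_mul_self_eq_frobenius_norm_sq]
  rw [← RCLike.ofReal_mul, RCLike.ofReal_le_ofReal, ← mul_pow]
  gcongr
  simpa only [frobenius_norm_conjTranspose] using frobenius_norm_mul B Cᴴ

end Matrix

/-- A set of states that can be perfectly discriminated by a single POVM on `ℂ^d`
has at most `d` elements. -/
theorem card_le_of_perfect_discrimination {d : ℕ} {A : Type*} [Fintype A]
    (E : A → Matrix (Fin d) (Fin d) ℂ) (hE : ∀ a, (E a).PosSemidef)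
    (hEsum : ∑ a, E a = 1)
    (h : ∀ a, ∃ ρ : Matrix (Fin d) (Fin d) ℂ,
      ρ.PosSemidef ∧ ρ.trace = 1 ∧ (ρ * E a).trace = 1) :
    Fintype.card A ≤ d := by
  have htrace : ∀ a, 1 ≤ (E a).trace := by
    intro a
    obtain ⟨ρ, hρ, hρtrace, hρE⟩ := h a
    simpa [hρtrace, hρE] using hρ.trace_mul_le (hE a)
  have hcard : (Fintype.card A : ℂ) ≤ d :=
    calc (Fintype.card A : ℂ) = ∑ _a : A, 1 := by simp
      _ ≤ ∑ a, (E a).trace := Finset.sum_le_sum fun a _ => htrace a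
      _ = d := by rw [← Matrix.trace_sum, hEsum]; simp
  exact_mod_cast hcard
end

section
/- Let n ≥ 1 and let {ν_r}_{r∈R} be a finite family of pairwise disjoint subsets of Fin n; set θ := ⋃_r (ν_r × ν_r). Let F ∈ Matrix (Fin n) (Fin n) ℂ be Hermitian with F_{ij} = 0 whenever (i,j) ∉ θ, and let (C_k, b_k)_{k∈K} be a finite family of constraints such that for each k, either C_k is supported on θ (C_k has zero entries off θ), or C_k is supported on the complement of θ and b_k = 0. Then for every positive semidefinite X ∈ Matrix (Fin n) (Fin n) ℂ satisfying trace(C_k* · X) = b_k for all k, the matrix X' defined by X'_{ij} = X_{ij} for (i,j) ∈ θ and X'_{ij} = 0 otherwise is positive semidefinite, satisfies trace(C_k* · X') = b_k for all k ∈ K, and has the same objective value trace(F* · X') = trace(F* · X). Consequently the semidefinite program restricted to matrices supported on θ has the same optimal value as the full program. -/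
open scoped ComplexOrder
open Matrix

/-- The compression of a positive semidefinite matrix to a principal block, extended by zero, is
positive semidefinite. -/
theorem Matrix.PosSemidef.principalBlock {m : Type*} [Fintype m] [DecidableEq m]
    {X : Matrix m m ℂ} (hX : X.PosSemidef) (s : Finset m) :
    (Matrix.of fun i j => if i ∈ s ∧ j ∈ s then X i j else 0).PosSemidef := by
  convert hX.conjTranspose_mul_mul_same (diagonal fun i => if i ∈ s then (1 : ℂ) else 0) using 1
  ext i j
  by_cases hi : i ∈ s <;> by_cases hj : j ∈ s <;>
    simp [diagonal_conjTranspose, hi, hj]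

/-- Pinching to pairwise disjoint principal blocks is the sum of the block compressions. -/
theorem Matrix.pinching_eq_sum {m R : Type*} [DecidableEq m] [Fintype R]
    {ν : R → Finset m} (hdisj : ∀ r r', r ≠ r' → Disjoint (ν r) (ν r')) (X : Matrix m m ℂ) :
    (Matrix.of fun i j =>
      if (i, j) ∈ Finset.univ.biUnion (fun r => ν r ×ˢ ν r) then X i j else 0) =
      ∑ r, Matrix.of fun i j => if i ∈ ν r ∧ j ∈ ν r then X i j else 0 := by
  ext i j
  simp only [Matrix.sum_apply, of_apply, Finset.mem_biUnion, Finset.mem_univ, true_and,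
    Finset.mem_product]
  split_ifs with h
  · obtain ⟨r, hr⟩ := h
    rw [Finset.sum_eq_single r, if_pos hr]
    · intro r' _ hne
      exact if_neg fun h' => Finset.disjoint_left.mp (hdisj r' r hne) h'.1 hr.1
    · simp
  · exact (Finset.sum_eq_zero fun r _ => if_neg fun hr => h ⟨r, hr⟩).symm

/-- The Hilbert–Schmidt inner product as a sum over entries. -/
theorem Matrix.trace_conjTranspose_mul {m : Type*} [Fintype m] (A B : Matrix m m ℂ) :
    (Aᴴ * B).trace = ∑ j, ∑ i, star (A i j) * B i j := by
  simp [trace, mul_apply]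

/-- Exactness of the sparse SDP implementation: if the objective `F` is supported on a union
`θ` of disjoint diagonal blocks, and every constraint is either supported on `θ` or supported
off `θ` with homogeneous right-hand side, then pinching any feasible `X` to `θ` preserves
positive semidefiniteness, feasibility, and the objective value. -/
theorem sparse_sdp_exact {n : ℕ} (hn : 1 ≤ n) {R : Type*} [Fintype R] [DecidableEq R]
    (ν : R → Finset (Fin n)) (hdisj : ∀ r r', r ≠ r' → Disjoint (ν r) (ν r'))
    (θ : Finset (Fin n × Fin n)) (hθ : θ = Finset.univ.biUnion fun r => ν r ×ˢ ν r)
    (F : Matrix (Fin n) (Fin n) ℂ) (hF : F.IsHermitian)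
    (hFsupp : ∀ i j, (i, j) ∉ θ → F i j = 0)
    {K : Type*} [Fintype K] (C : K → Matrix (Fin n) (Fin n) ℂ) (b : K → ℂ)
    (hC : ∀ k, (∀ i j, (i, j) ∉ θ → C k i j = 0) ∨
      ((∀ i j, (i, j) ∈ θ → C k i j = 0) ∧ b k = 0))
    (X : Matrix (Fin n) (Fin n) ℂ) (hX : X.PosSemidef)
    (hXfeas : ∀ k, ((C k)ᴴ * X).trace = b k)
    (X' : Matrix (Fin n) (Fin n) ℂ)
    (hX' : ∀ i j, X' i j = if (i, j) ∈ θ then X i j else 0) :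
    X'.PosSemidef ∧ (∀ k, ((C k)ᴴ * X').trace = b k) ∧ (Fᴴ * X').trace = (Fᴴ * X).trace := by
  have htrace : ∀ A : Matrix (Fin n) (Fin n) ℂ, (∀ i j, (i, j) ∉ θ → A i j = 0) →
      (Aᴴ * X').trace = (Aᴴ * X).trace := by
    intro A hA
    simp only [trace_conjTranspose_mul]
    refine Finset.sum_congr rfl fun j _ => Finset.sum_congr rfl fun i _ => ?_
    by_cases h : (i, j) ∈ θ
    · rw [hX', if_pos h]
    · simp [hA i j h]
  refine ⟨?_, fun k => ?_, htrace F hFsupp⟩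
  · have hsum : X' = ∑ r, Matrix.of fun i j => if i ∈ ν r ∧ j ∈ ν r then X i j else 0 := by
      rw [← pinching_eq_sum hdisj, ← hθ]
      exact Matrix.ext hX'
    rw [hsum]
    exact posSemidef_sum _ fun r _ => hX.principalBlock (ν r)
  · rcases hC k with h | ⟨h, hb⟩
    · rw [htrace _ h, hXfeas]
    · rw [hb, trace_conjTranspose_mul]
      refine Finset.sum_eq_zero fun j _ => Finset.sum_eq_zero fun i _ => ?_
      by_cases hij : (i, j) ∈ θ
      · simp [h i j hij]
      · simp [hX', hij]
end

section
/- Let d ≥ 1 and N ≥ 2, and let Φ ∈ Matrix (Fin N → Fin d × Fin d) (Fin N → Fin d × Fin d) ℂ be positive semidefinite with trace 1, invariant under simultaneous index permutations (Φ_{v∘σ, v'∘σ} = Φ_{v,v'} for all permutations σ of Fin N), and satisfying the first-party trace-preservation constraint: for all j, j' ∈ Fin d and all w, w' : Fin (N−1) → Fin d × Fin d, ∑_{o} Φ_{(cons(j,o) w),(cons(j',o) w')} = (δ_{j,j'}/d) · ∑_{j'', o} Φ_{(cons(j'',o) w),(cons(j'',o) w')}. Then the partial trace of Φ over the last party, Φ'_{w,w'}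 := ∑_{x ∈ Fin d × Fin d} Φ_{(snoc w x),(snoc w' x)} (w, w' : Fin (N−1) → Fin d × Fin d), is positive semidefinite, has trace 1, is invariant under simultaneous index permutations of Fin (N−1), and satisfies the same first-party trace-preservation constraint. Consequently every feasible point of the level-(N) relaxation yields a feasible point of the level-(N−1) relaxation with the same value on any objective supported on the first N−1 parties, so the SDP bounds ω̃^{a,N}_{d_E} are non-increasing in N. -/
open scoped ComplexOrder

/-- Every permutation of the first `n` indices extends to one of `n + 1` indices fixing the
last index. -/
theorem exists_perm_snoc_comp {n : ℕ} {α : Type*} (σ : Equiv.Perm (Fin n)) :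
    ∃ τ : Equiv.Perm (Fin (n + 1)), ∀ (w : Fin n → α) (x : α),
      (Fin.snoc w x : Fin (n + 1) → α) ∘ τ = Fin.snoc (w ∘ σ) x := by
  refine ⟨finSuccEquivLast.symm.permCongr (Equiv.optionCongr σ), fun w x => ?_⟩
  funext i
  refine Fin.lastCases ?_ (fun i => ?_) i <;> simp [Equiv.permCongr_apply]

/-- Tracing out the last party of a feasible point of the level-`N` SDP relaxation
(`N = k + 2`) yields a feasible point of the level-`(N-1)` relaxation: the partial trace is
positive semidefinite, has unit trace, is invariant under simultaneous index permutations,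
and satisfies the same first-party trace-preservation constraint. Hence the SDP bounds are
non-increasing in `N`. -/
theorem partial_trace_feasible {d : ℕ} (hd : 1 ≤ d) (k : ℕ)
    (Φ : Matrix (Fin (k + 2) → Fin d × Fin d) (Fin (k + 2) → Fin d × Fin d) ℂ)
    (hpsd : Φ.PosSemidef) (htr : Φ.trace = 1)
    (hperm : ∀ (σ : Equiv.Perm (Fin (k + 2))) (v v' : Fin (k + 2) → Fin d × Fin d),
      Φ (v ∘ σ) (v' ∘ σ) = Φ v v')
    (hTP : ∀ (j j' : Fin d) (w w' : Fin (k + 1) → Fin d × Fin d),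
      ∑ o : Fin d, Φ (Fin.cons (j, o) w) (Fin.cons (j', o) w') =
        (if j = j' then 1 else 0) / (d : ℂ) *
          ∑ j'' : Fin d, ∑ o : Fin d, Φ (Fin.cons (j'', o) w) (Fin.cons (j'', o) w'))
    (Φ' : Matrix (Fin (k + 1) → Fin d × Fin d) (Fin (k + 1) → Fin d × Fin d) ℂ)
    (hΦ' : ∀ w w', Φ' w w' = ∑ x : Fin d × Fin d, Φ (Fin.snoc w x) (Fin.snoc w' x)) :
    Φ'.PosSemidef ∧ Φ'.trace = 1 ∧
      (∀ (σ : Equiv.Perm (Fin (k + 1))) (w w' : Fin (k + 1) → Fin d × Fin d),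
        Φ' (w ∘ σ) (w' ∘ σ) = Φ' w w') ∧
      (∀ (j j' : Fin d) (w w' : Fin k → Fin d × Fin d),
        ∑ o : Fin d, Φ' (Fin.cons (j, o) w) (Fin.cons (j', o) w') =
          (if j = j' then 1 else 0) / (d : ℂ) *
            ∑ j'' : Fin d, ∑ o : Fin d, Φ' (Fin.cons (j'', o) w) (Fin.cons (j'', o) w')) := by
  obtain rfl : Φ' = ∑ x : Fin d × Fin d,
      Φ.submatrix (fun w => Fin.snoc w x) (fun w => Fin.snoc w x) := by
    ext w w'
    simp [hΦ', Matrix.sum_apply]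
  refine ⟨Matrix.posSemidef_sum _ fun x _ => hpsd.submatrix _, ?_, fun σ w w' => ?_,
    fun j j' w w' => ?_⟩
  · rw [← htr, Matrix.trace_sum, Matrix.trace,
      ← (Fin.snocEquiv fun _ : Fin (k + 2) => Fin d × Fin d).sum_comp]
    symm
    exact Fintype.sum_prod_type _
  · obtain ⟨τ, hτ⟩ := exists_perm_snoc_comp (α := Fin d × Fin d) σ
    rw [hΦ', hΦ']
    exact Finset.sum_congr rfl fun x _ => by rw [← hτ, ← hτ, hperm]
  · simp only [hΦ', ← Fin.cons_snoc_eq_snoc_cons]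
    rw [Finset.sum_comm]
    simp only [hTP j j']
    rw [← Finset.mul_sum, Finset.sum_comm]
    congr 1
    exact Finset.sum_congr rfl fun _ _ => Finset.sum_comm
end
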